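/- Let D_n = ⟨x, a | xⁿ = a² = e, ax = x⁻¹a⟩ be the dihedral group of order 2n, with cyclic subgroup C_n = ⟨x⟩. Let v be an odd positive divisor of n, l = n/v, and suppose X ⊆ C_n satisfies: (i) X is a union of cosets of ⟨x^v⟩, i.e. X = T⟨x^v⟩ for some T ⊆ {x, x², …, x^{v−1}}; and (ii) X ∩ X⁽⁻¹⁾ = ∅ and X ∪ X⁽⁻¹⁾ = C_n \ ⟨x^v⟩. Then the Cayley graph C(D_n, X ∪ Xa) is a directed strongly regular graph with parameters (2n, n − l, (n−l)/2, (n−l)/2 − l, (n−l)/2). -/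

import Mathlib

/-!
Let `f` and `h` be the indicator functions of `X` and `H = ⟨x^v⟩` on `ZMod n`. The condition on
`X ∪ X⁽⁻¹⁾` says `f k + f (-k) + h k = 1`, and `X` being a union of cosets says that `f` is
`H`-invariant. Since `r i * sr 0 = sr (-i)`, the entry of the adjacency matrix `A` at
`(g, r j)` is `f (j - i)` and at `(g, sr j)` it is `f (i - j)`, where `i` is the exponent of `g`,
whether `g` is `r i` or `sr i`. Hence an entry of `A * A` is
`∑ k, (f (k - i) + f (i - k)) * φ k = ∑ k, (1 - h (k - i)) * φ k`, where `φ` is a translate of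
`f` or of its reflection; invariance of `f` under `H` turns this into `|X| - l * A`. Summing the
first relation over `k` gives `2 * |X| = n - l`, so `A * A = μ J - l A` with `μ = (n - l) / 2`,
which is the claim because `t = μ` and `λ = μ - l`.
-/

open Matrix

/-- The all-ones matrix. -/
def allOnes (V : Type*) [Fintype V] : Matrix V V ℤ :=
  Matrix.of fun _ _ => (1 : ℤ)

/-- `A` is the adjacency matrix of a directed strongly regular graph with
parameters `(n, k, μ, λ, t)`. -/
def IsDSRG {V : Type*} [Fintype V] [DecidableEq V] (A : Matrix V V ℤ)
    (n k μ lam t : ℤ) : Prop :=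
  (Fintype.card V : ℤ) = n ∧
  (∀ i j, A i j = 0 ∨ A i j = 1) ∧
  (∀ i, A i i = 0) ∧
  A * allOnes V = k • allOnes V ∧
  allOnes V * A = k • allOnes V ∧
  A * A = t • (1 : Matrix V V ℤ) + lam • A + μ • (allOnes V - 1 - A)

/-- The adjacency matrix of the Cayley graph `C(G, S)`. -/
def cayleyAdj (G : Type*) [Group G] [Fintype G] [DecidableEq G] (S : Finset G) :
    Matrix G G ℤ :=
  Matrix.of fun x y => if y * x⁻¹ ∈ S then (1 : ℤ) else 0

/-- The connection set `X ∪ Ya ⊆ D_n`, where `X, Y ⊆ C_n = ⟨x⟩` are identified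
with subsets of `ZMod n` (the exponent of `x = r 1`), and `a = sr 0`. -/
def dihedralS (n : ℕ) (X Y : Finset (ZMod n)) : Finset (DihedralGroup n) :=
  X.image DihedralGroup.r ∪
    Y.image fun i => DihedralGroup.r i * DihedralGroup.sr 0

/-- `Z̄ = ∑_{g ∈ Z} g` in the group ring `ℤ[C_n]` of the cyclic group `C_n`,
realised as `AddMonoidAlgebra ℤ (ZMod n)`. -/
noncomputable def cycBar (n : ℕ) (Z : Finset (ZMod n)) : AddMonoidAlgebra ℤ (ZMod n) :=
  ∑ i ∈ Z, AddMonoidAlgebra.single i 1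


/-- The coset `x^a·⟨x^v⟩` of the subgroup `⟨x^v⟩` of `C_n ≅ ZMod n`, where
`l = n/v` is the order of `⟨x^v⟩`. -/
def vCoset (n v l a : ℕ) : Finset (ZMod n) :=
  (Finset.range l).image fun j => ((a + v * j : ℕ) : ZMod n)

theorem mem_vCoset_iff {n v l : ℕ} [NeZero n] (hn : n = v * l) (a : ℕ) (z : ZMod n) :
    z ∈ vCoset n v l a ↔ ∃ c : ℤ, z = (a : ZMod n) + v * c := by
  have hl : 0 < l := Nat.pos_of_ne_zero fun h => NeZero.ne n (by simp [hn, h])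
  have hvl : (v : ZMod n) * (l : ZMod n) = 0 := by
    rw [← Nat.cast_mul, ← hn, ZMod.natCast_self]
  unfold vCoset
  simp only [Finset.mem_image, Finset.mem_range]
  constructor
  · rintro ⟨j, -, rfl⟩
    exact ⟨j, by push_cast; ring⟩
  · rintro ⟨c, rfl⟩
    have h0 : 0 ≤ c % (l : ℤ) := Int.emod_nonneg _ (by omega)
    have h1 : c % (l : ℤ) < l := Int.emod_lt_of_pos _ (by omega)
    refine ⟨(c % (l : ℤ)).toNat, by omega, ?_⟩
    have h2 : (((c % (l : ℤ)).toNat : ℕ) : ZMod n) = ((c % (l : ℤ) : ℤ) : ZMod n) := by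
      rw [← Int.cast_natCast, Int.toNat_of_nonneg h0]
    have h3 : (c : ZMod n) = ((c % (l : ℤ) : ℤ) : ZMod n) + l * ((c / (l : ℤ) : ℤ) : ZMod n) := by
      conv_lhs => rw [← Int.emod_add_mul_ediv c l]
      push_cast
      ring
    push_cast
    rw [h2, h3]
    linear_combination (-((c / (l : ℤ) : ℤ) : ZMod n)) * hvl

theorem card_vCoset_zero {n v l : ℕ} (hv : 0 < v) (hn : n = v * l) :
    (vCoset n v l 0).card = l := by
  unfold vCoset
  rw [Finset.card_image_of_injOn, Finset.card_range]
  intro i hi j hj hij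
  simp only [Finset.coe_range, Set.mem_Iio] at hi hj
  simp only [zero_add, ZMod.natCast_eq_natCast_iff] at hij
  rw [hn] at hij
  have := Nat.ModEq.mul_left_cancel' hv.ne' hij
  exact Nat.ModEq.eq_of_lt_of_lt this hi hj

theorem sum_dihedral {n : ℕ} [NeZero n] (F : DihedralGroup n → ℤ) :
    ∑ g, F g = ∑ k : ZMod n, (F (.r k) + F (.sr k)) := by
  let e : ZMod n ⊕ ZMod n ≃ DihedralGroup n :=
    { toFun := Sum.elim .r .sr
      invFun := fun g => match g with
        | .r i => .inl i
        | .sr i => .inr i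
      left_inv := by rintro (i | i) <;> rfl
      right_inv := by rintro (i | i) <;> rfl }
  rw [← e.sum_comp, Fintype.sum_sum_type, Finset.sum_add_distrib]
  rfl

/-- The identity behind `A * A = μ J - l A`: the kernel `f k + f (-k)` equals `1 - h k`, and
`f` is invariant under the support of `h`, so summing the kernel against a translate of `f` gives
`∑ f` minus `∑ h` times a value of `f`. -/
theorem sum_kernel_mul {n : ℕ} [NeZero n] (f h : ZMod n → ℤ)
    (h1 : ∀ k, f k + f (-k) + h k = 1) (h2 : ∀ k m, h m * f (k + m) = h m * f k)
    (i j : ZMod n) :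
    ∑ k, (f (k - i) + f (i - k)) * f (k - j) = ∑ k, f k - (∑ k, h k) * f (i - j) := by
  have : ∀ k, (f (k - i) + f (i - k)) * f (k - j) = f (k - j) - h (k - i) * f (i - j) := by
    intro k
    have e1 := h1 (k - i)
    have e2 := h2 (i - j) (k - i)
    rw [neg_sub] at e1
    rw [show i - j + (k - i) = k - j by ring] at e2
    linear_combination f (k - j) * e1 - e2
  simp_rw [this, Finset.sum_sub_distrib, ← Finset.sum_mul]
  exact congrArg₂ (fun a b : ℤ => a - b * f (i - j)) ((Equiv.subRight j).sum_comp f)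
    ((Equiv.subRight i).sum_comp h)

/-- Construction: let `v` be an odd positive divisor of `n`, `l = n/v`, and let
`X ⊆ C_n` be a union `T⟨x^v⟩` of nontrivial cosets of `⟨x^v⟩` such that
`X ∩ X⁽⁻¹⁾ = ∅` and `X ∪ X⁽⁻¹⁾ = C_n \ ⟨x^v⟩`.  Then `C(D_n, X ∪ Xa)` is a
DSRG with parameters `(2n, n−l, (n−l)/2, (n−l)/2 − l, (n−l)/2)`. -/
theorem dihedral_construction_odd (n v l : ℕ) [NeZero n]
    (hv : 0 < v) (hodd : Odd v) (hn : n = v * l)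
    (X : Finset (ZMod n))
    (hT : ∃ T ⊆ Finset.Ioo 0 v, X = T.biUnion (vCoset n v l))
    (hdisj : X ∩ X.image (fun i => -i) = ∅)
    (hcover : X ∪ X.image (fun i => -i) = Finset.univ \ vCoset n v l 0) :
    IsDSRG (cayleyAdj (DihedralGroup n) (dihedralS n X X))
      (2 * n) ((n : ℤ) - l) (((n : ℤ) - l) / 2) (((n : ℤ) - l) / 2 - l)
      (((n : ℤ) - l) / 2) := by
  set f : ZMod n → ℤ := fun i => if i ∈ X then 1 else 0 with hf
  set h : ZMod n → ℤ := fun i => if i ∈ vCoset n v l 0 then 1 else 0 with hh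
  have hneg : ∀ k, k ∈ X.image (fun i => -i) ↔ -k ∈ X := by
    intro k
    simp only [Finset.mem_image]
    exact ⟨fun ⟨a, ha, e⟩ => by rw [← e, neg_neg]; exact ha, fun hk => ⟨-k, hk, neg_neg k⟩⟩
  have hd : ∀ k, k ∈ X → -k ∉ X := by
    intro k h1 h2
    have : k ∈ X ∩ X.image (fun i => -i) := Finset.mem_inter.2 ⟨h1, (hneg k).2 h2⟩
    simp [hdisj] at this
  have hc : ∀ k, (k ∈ X ∨ -k ∈ X) ↔ k ∉ vCoset n v l 0 := by
    intro k
    rw [← hneg k, ← Finset.mem_union, hcover]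
    simp
  have hshift : ∀ k m, m ∈ vCoset n v l 0 → k ∈ X → k + m ∈ X := by
    obtain ⟨T, -, rfl⟩ := hT
    intro k m hm hk
    simp only [Finset.mem_biUnion, mem_vCoset_iff hn] at hm hk ⊢
    obtain ⟨c, rfl⟩ := hm
    obtain ⟨a, ha, d, rfl⟩ := hk
    exact ⟨a, ha, d + c, by push_cast; ring⟩
  have hHneg : ∀ m, m ∈ vCoset n v l 0 → -m ∈ vCoset n v l 0 := by
    intro m hm
    rw [mem_vCoset_iff hn] at hm ⊢
    obtain ⟨c, rfl⟩ := hm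
    exact ⟨-c, by push_cast; ring⟩
  have h1 : ∀ k, f k + f (-k) + h k = 1 := by
    intro k
    have a := hd k
    have b := hc k
    simp only [hf, hh]
    by_cases p : k ∈ X <;> by_cases q : -k ∈ X <;> by_cases r : k ∈ vCoset n v l 0 <;>
      simp_all
  have h2 : ∀ k m, h m * f (k + m) = h m * f k := by
    intro k m
    by_cases hm : m ∈ vCoset n v l 0
    · have : k + m ∈ X ↔ k ∈ X :=
        ⟨fun hk => by simpa using hshift _ _ (hHneg m hm) hk, hshift k m hm⟩
      simp [hf, this]
    · simp [hh, hm]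
  have hsum_h : ∑ k, h k = l := by
    simp only [hh, Finset.sum_boole, Finset.filter_univ_mem, card_vCoset_zero hv hn]
  have hsum_neg : ∑ k, f (-k) = ∑ k, f k :=
    Equiv.sum_comp (Equiv.neg (ZMod n)) f
  have hsum_f : 2 * ∑ k, f k = (n : ℤ) - l := by
    have := Finset.sum_congr (s₁ := Finset.univ) rfl fun k _ => h1 k
    rw [Finset.sum_add_distrib, Finset.sum_add_distrib, hsum_neg, hsum_h] at this
    simp at this
    linarith
  have hhalf : ((n : ℤ) - l) / 2 = ∑ k, f k := by omega
  have hf0 : f 0 = 0 := by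
    have : (0 : ZMod n) ∉ X := fun p => hd 0 p (by simpa using p)
    simp [hf, this]
  set A := cayleyAdj (DihedralGroup n) (dihedralS n X X) with hA
  have mem_r : ∀ k, DihedralGroup.r k ∈ dihedralS n X X ↔ k ∈ X := by
    intro k
    simp [dihedralS]
  have mem_sr : ∀ k, DihedralGroup.sr k ∈ dihedralS n X X ↔ -k ∈ X := by
    intro k
    simp [dihedralS, neg_eq_iff_eq_neg]
  have Arr : ∀ i j, A (.r i) (.r j) = f (j - i) := by
    intro i j
    simp [hA, cayleyAdj, hf, mem_r, sub_eq_add_neg]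
  have Ars : ∀ i j, A (.r i) (.sr j) = f (i - j) := by
    intro i j
    simp [hA, cayleyAdj, hf, mem_sr, sub_eq_add_neg]
  have Asr : ∀ i j, A (.sr i) (.r j) = f (j - i) := by
    intro i j
    simp [hA, cayleyAdj, hf, mem_sr]
  have Ass : ∀ i j, A (.sr i) (.sr j) = f (i - j) := by
    intro i j
    simp [hA, cayleyAdj, hf, mem_r]
  have sumR : ∀ i, ∑ k, f (k - i) = ∑ k, f k := fun i => (Equiv.subRight i).sum_comp f
  have sumL : ∀ i, ∑ k, f (i - k) = ∑ k, f k := fun i => (Equiv.subLeft i).sum_comp f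
  have conv := sum_kernel_mul f h h1 h2
  rw [hsum_h] at conv
  -- The substitution `k ↦ -k` gives the same identity for the reflected right-hand factor.
  have conv' : ∀ i j, ∑ k, (f (k - i) + f (i - k)) * f (j - k)
      = ∑ k, f k - (l : ℤ) * f (j - i) := by
    intro i j
    rw [show j - i = -i - -j by ring, ← conv (-i) (-j),
      ← Equiv.sum_comp (Equiv.neg (ZMod n))]
    refine Finset.sum_congr rfl fun k _ => ?_
    simp only [Equiv.neg_apply]
    rw [show -k - i = -i - k by ring, show i - -k = k - -i by ring,
      show j - -k = k - -j by ring]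
    ring
  rw [hhalf, ← hsum_f]
  refine ⟨by rw [DihedralGroup.card]; push_cast; ring, ?_, ?_, ?_, ?_, ?_⟩
  · intro i j
    simp only [hA, cayleyAdj, Matrix.of_apply]
    split_ifs <;> simp
  · rintro (i | i)
    · rw [Arr, sub_self, hf0]
    · rw [Ass, sub_self, hf0]
  · ext g g'
    rw [Matrix.mul_apply, sum_dihedral]
    rcases g with i | i <;>
      simp [allOnes, Arr, Ars, Asr, Ass, Finset.sum_add_distrib, sumR, sumL, two_mul]
  · ext g g'
    rw [Matrix.mul_apply, sum_dihedral]
    rcases g' with i | i <;>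
      simp [allOnes, Arr, Ars, Asr, Ass, Finset.sum_add_distrib, sumR, sumL, two_mul]
  · have key : A * A = (∑ k, f k) • allOnes _ - (l : ℤ) • A := by
      ext g g'
      rw [Matrix.mul_apply, sum_dihedral]
      rcases g with i | i <;> rcases g' with j | j <;>
        simp only [Arr, Ars, Asr, Ass, ← add_mul, conv, conv', allOnes, Matrix.sub_apply,
          Matrix.smul_apply, Matrix.of_apply, smul_eq_mul, mul_one]
    rw [key]
    module
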